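/- Smallness of the first Green's function correction: let h₁ = -κ^{-1} R₀(2κ) u. Then ‖2κ h₁‖_{L∞} = 2‖R₀(2κ)u‖_{L∞} ≲ κ^{-1/2} ‖u‖_{H^{-1}_κ} uniformly for κ ≥ 1; consequently there is a constant C such that if κ ≥ 1 + C‖u‖²_{H^{-1}_κ}, then ‖2κh₁‖_{L∞} < 1 and hence ‖1/(1+2κh₁)‖_{L∞} + ‖2κh₁/(1+2κh₁)‖_{L∞} ≲ 1. -/

import Mathlib

/-!
The pointwise bound is an `L¹`-`L²` duality on the Fourier side. With `k = 2κ`, Fourier inversion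
for `t ↦ exp (-k|t|)`, whose transform is the Lorentzian `2k / (ξ² + k²)`, and Fubini give
`R₀(k)u(x) = (2π)^{-1/2} ∫ e^{iξx} (ξ² + k²)⁻¹ û(ξ) dξ` (`exp_neg_abs_eq_integral`, `conv_eq`).
Cauchy–Schwarz with the weight split evenly (`integral_weight_mul_le`), together with
`∫ (ξ² + k²)⁻¹ dξ = π / k`, yields `|2κh₁| ≤ κ^{-1/2} ‖u‖_{H^{-1}_κ}` (`abs_two_mul_hOne_le`).
The remaining claims are elementary: if `κ ≥ 1 + 4‖u‖²`, then `|2κh₁| ≤ 1/2`, so the two quotients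
are at most `2` and `1` in absolute value.
-/

open MeasureTheory

/-- Fourier transform with convention `f̂(ξ) = (2π)^{-1/2} ∫ e^{-iξx} f(x) dx`. -/
noncomputable def fHat (f : ℝ → ℂ) (ξ : ℝ) : ℂ :=
  (Real.sqrt (2 * Real.pi))⁻¹ • ∫ x : ℝ, Complex.exp (-(Complex.I * (ξ : ℂ) * (x : ℂ))) * f x

/-- The norm `‖f‖_{H^s_κ}`, with `‖f‖²_{H^s_κ} = ∫ |f̂(ξ)|² (ξ² + 4κ²)^s dξ`. -/
noncomputable def sobNormK (s κ : ℝ) (f : ℝ → ℂ) : ℝ :=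
  Real.sqrt (∫ ξ : ℝ, ‖fHat f ξ‖ ^ 2 * (ξ ^ 2 + 4 * κ ^ 2) ^ s)


/-- `h₁ = -κ⁻¹ R₀(2κ) u`, where `R₀(2κ)` has kernel `(4κ)⁻¹ e^{-2κ|x-y|}`. -/
noncomputable def hOne (κ : ℝ) (u : ℝ → ℝ) (x : ℝ) : ℝ :=
  -κ⁻¹ * ∫ y : ℝ, (4 * κ)⁻¹ * Real.exp (-2 * κ * |x - y|) * u y

open scoped FourierTransform

lemma lorentz_integrable_integral {k : ℝ} (hk : 0 < k) :
    Integrable (fun ξ : ℝ => (ξ ^ 2 + k ^ 2)⁻¹) ∧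
      ∫ ξ : ℝ, (ξ ^ 2 + k ^ 2)⁻¹ = Real.pi / k := by
  have h : (fun ξ : ℝ => (ξ ^ 2 + k ^ 2)⁻¹)
      = fun ξ : ℝ => (k ^ 2)⁻¹ * (1 + (ξ / k) ^ 2)⁻¹ := by
    funext ξ
    field_simp
    ring
  rw [h]
  refine ⟨(integrable_inv_one_add_sq.comp_div hk.ne').const_mul _, ?_⟩
  rw [integral_const_mul, Measure.integral_comp_div (fun t : ℝ => (1 + t ^ 2)⁻¹) k,
    integral_univ_inv_one_add_sq, abs_of_pos hk, smul_eq_mul]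
  field_simp

lemma fourier_exp_neg_abs {k : ℝ} (hk : 0 < k) :
    Integrable (fun t : ℝ => ((Real.exp (-k * |t|) : ℝ) : ℂ)) ∧
    ∀ w : ℝ, 𝓕 (fun t : ℝ => ((Real.exp (-k * |t|) : ℝ) : ℂ)) w
      = ((2 * k * ((2 * Real.pi * w) ^ 2 + k ^ 2)⁻¹ : ℝ) : ℂ) := by
  -- On each half-line the integrand is a single complex exponential.
  have hl : ∀ w : ℝ, ∀ t ∈ Set.Iic (0 : ℝ),
      Complex.exp ((-2 * Real.pi * t * w : ℝ) * Complex.I) • ((Real.exp (-k * |t|) : ℝ) : ℂ)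
        = Complex.exp ((k - 2 * Real.pi * w * Complex.I) * t) := by
    intro w t ht
    rw [abs_of_nonpos ht, smul_eq_mul, Complex.ofReal_exp, ← Complex.exp_add]
    congr 1; push_cast; ring
  have hr : ∀ w : ℝ, ∀ t ∈ Set.Ioi (0 : ℝ),
      Complex.exp ((-2 * Real.pi * t * w : ℝ) * Complex.I) • ((Real.exp (-k * |t|) : ℝ) : ℂ)
        = Complex.exp ((-k - 2 * Real.pi * w * Complex.I) * t) := by
    intro w t ht
    rw [abs_of_pos ht, smul_eq_mul, Complex.ofReal_exp, ← Complex.exp_add]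
    congr 1; push_cast; ring
  have hre1 : ∀ w : ℝ, 0 < ((k : ℂ) - 2 * Real.pi * w * Complex.I).re := by
    intro w; simpa using hk
  have hre2 : ∀ w : ℝ, (-(k : ℂ) - 2 * Real.pi * w * Complex.I).re < 0 := by
    intro w; simpa using hk
  have il : ∀ w : ℝ, IntegrableOn (fun t : ℝ =>
      Complex.exp ((-2 * Real.pi * t * w : ℝ) * Complex.I) • ((Real.exp (-k * |t|) : ℝ) : ℂ))
      (Set.Iic 0) := fun w =>
    (integrableOn_congr_fun (hl w) measurableSet_Iic).2 (integrableOn_exp_mul_complex_Iic (hre1 w) 0)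
  have ir : ∀ w : ℝ, IntegrableOn (fun t : ℝ =>
      Complex.exp ((-2 * Real.pi * t * w : ℝ) * Complex.I) • ((Real.exp (-k * |t|) : ℝ) : ℂ))
      (Set.Ioi 0) := fun w =>
    (integrableOn_congr_fun (hr w) measurableSet_Ioi).2 (integrableOn_exp_mul_complex_Ioi (hre2 w) 0)
  constructor
  · have := (il 0).union (ir 0)
    rw [Set.Iic_union_Ioi, integrableOn_univ] at this
    simpa using this
  · intro w
    rw [Real.fourier_real_eq_integral_exp_smul,
      ← intervalIntegral.integral_Iic_add_Ioi (il w) (ir w),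
      setIntegral_congr_fun measurableSet_Iic (hl w), setIntegral_congr_fun measurableSet_Ioi (hr w),
      integral_exp_mul_complex_Iic (hre1 w), integral_exp_mul_complex_Ioi (hre2 w)]
    have h1 : (k : ℂ) - 2 * Real.pi * w * Complex.I ≠ 0 := fun h => by
      have := hre1 w; rw [h] at this; simp at this
    have h2 : -(k : ℂ) - 2 * Real.pi * w * Complex.I ≠ 0 := fun h => by
      have := hre2 w; rw [h] at this; simp at this
    have h3 : ((2 * Real.pi * w : ℂ)) ^ 2 + (k : ℂ) ^ 2 ≠ 0 := by
      have : (2 * Real.pi * w) ^ 2 + k ^ 2 ≠ 0 := by positivity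
      exact_mod_cast this
    push_cast
    simp only [mul_zero, Complex.exp_zero]
    rw [div_add_div _ _ h1 h2, ← div_eq_mul_inv, div_eq_div_iff (mul_ne_zero h1 h2) h3]
    linear_combination (-2 * k * (2 * Real.pi * w : ℂ) ^ 2) * Complex.I_sq

/-- The resolvent kernel as an inverse Fourier transform: Fourier inversion applied to
`t ↦ exp (-k|t|)`, rescaled to the angular frequency `ξ = 2πw`. -/
lemma exp_neg_abs_eq_integral {k : ℝ} (hk : 0 < k) (t : ℝ) :
    ((Real.exp (-k * |t|) : ℝ) : ℂ) = (k / Real.pi : ℝ) *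
      ∫ ξ : ℝ, Complex.exp (Complex.I * ξ * t) * (((ξ ^ 2 + k ^ 2)⁻¹ : ℝ) : ℂ) := by
  obtain ⟨hi, hF⟩ := fourier_exp_neg_abs hk
  have hc : Continuous (fun t : ℝ => ((Real.exp (-k * |t|) : ℝ) : ℂ)) := by fun_prop
  have hFi : Integrable (𝓕 (fun t : ℝ => ((Real.exp (-k * |t|) : ℝ) : ℂ))) := by
    rw [show 𝓕 (fun t : ℝ => ((Real.exp (-k * |t|) : ℝ) : ℂ)) = _ from funext hF]
    exact ((((lorentz_integrable_integral hk).1).comp_mul_left'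
      (R := 2 * Real.pi) (by positivity)).const_mul (2 * k)).ofReal
  have h := congrFun (hc.fourierInv_fourier_eq hi hFi) t
  rw [Real.fourierInv_eq'] at h
  simp only [hF] at h
  rw [← h]
  have := Measure.integral_comp_mul_left (fun ξ : ℝ =>
    Complex.exp (Complex.I * ξ * t) * (((ξ ^ 2 + k ^ 2)⁻¹ : ℝ) : ℂ)) (2 * Real.pi)
  have h2 : ∫ ξ : ℝ, Complex.exp (Complex.I * ξ * t) * (((ξ ^ 2 + k ^ 2)⁻¹ : ℝ) : ℂ)
      = (2 * Real.pi : ℝ) * ∫ w : ℝ, Complex.exp (Complex.I * ((2 * Real.pi * w : ℝ) : ℂ) * t) *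
        ((((2 * Real.pi * w) ^ 2 + k ^ 2)⁻¹ : ℝ) : ℂ) := by
    rw [this, abs_of_pos (by positivity), Complex.real_smul, ← mul_assoc, ← Complex.ofReal_mul,
      mul_inv_cancel₀ (by positivity)]
    simp
  rw [h2, ← mul_assoc, ← integral_const_mul]
  refine integral_congr_ae (Filter.Eventually.of_forall fun w => ?_)
  have hpi : (Real.pi : ℂ) ≠ 0 := by exact_mod_cast Real.pi_ne_zero
  simp only [smul_eq_mul, RCLike.inner_apply, conj_trivial]
  rw [show ((2 * Real.pi * (t * w) : ℝ) : ℂ) * Complex.I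
    = Complex.I * ((2 * Real.pi * w : ℝ) : ℂ) * t by push_cast; ring]
  push_cast
  field_simp

lemma fHat_continuous {f : ℝ → ℂ} (hf : Integrable f) : Continuous (fHat f) := by
  suffices h : Continuous fun ξ : ℝ =>
      ∫ x : ℝ, Complex.exp (-(Complex.I * (ξ : ℂ) * (x : ℂ))) * f x from
    h.const_smul (Real.sqrt (2 * Real.pi))⁻¹
  refine continuous_of_dominated (bound := fun x => ‖f x‖) (fun ξ => ?_) (fun ξ => ?_) hf.norm ?_
  · exact (Continuous.aestronglyMeasurable (by fun_prop)).mul hf.aestronglyMeasurable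
  · refine Filter.Eventually.of_forall fun x => ?_
    rw [norm_mul, Complex.norm_exp]
    simp
  · exact Filter.Eventually.of_forall fun x => by fun_prop

/-- The convolution with `exp (-k|·|)`, written on the Fourier side. -/
lemma conv_eq {k : ℝ} (hk : 0 < k) {f : ℝ → ℂ} (hf : Integrable f) (x : ℝ) :
    ∫ y : ℝ, ((Real.exp (-k * |x - y|) : ℝ) : ℂ) * f y =
      (k / Real.pi * Real.sqrt (2 * Real.pi) : ℝ) * ∫ ξ : ℝ,
        Complex.exp (Complex.I * ξ * x) * (((ξ ^ 2 + k ^ 2)⁻¹ : ℝ) : ℂ) * fHat f ξ := by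
  have hint : Integrable (Function.uncurry fun y ξ : ℝ =>
      Complex.exp (Complex.I * ξ * (x - y : ℝ)) * (((ξ ^ 2 + k ^ 2)⁻¹ : ℝ) : ℂ) * f y)
      (volume.prod volume) := by
    have h0 := hf.mul_prod ((lorentz_integrable_integral hk).1.ofReal (𝕜 := ℂ))
    have hexp : Continuous fun p : ℝ × ℝ => Complex.exp (Complex.I * p.2 * (x - p.1 : ℝ)) := by
      fun_prop
    refine (h0.bdd_mul (c := 1) hexp.aestronglyMeasurable
      (Filter.Eventually.of_forall fun p => ?_)).congr (Filter.Eventually.of_forall fun p => ?_)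
    · rw [Complex.norm_exp]
      simp
    · simp only [Function.uncurry]
      rw [mul_comm (f p.1), ← mul_assoc]
      rfl
  calc ∫ y : ℝ, ((Real.exp (-k * |x - y|) : ℝ) : ℂ) * f y
      = ∫ y : ℝ, (k / Real.pi : ℝ) * ∫ ξ : ℝ,
        Complex.exp (Complex.I * ξ * (x - y : ℝ)) * (((ξ ^ 2 + k ^ 2)⁻¹ : ℝ) : ℂ) * f y := by
        refine integral_congr_ae (Filter.Eventually.of_forall fun y => ?_)
        simp only
        rw [exp_neg_abs_eq_integral hk, integral_mul_const, mul_assoc]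
    _ = (k / Real.pi : ℝ) * ∫ ξ : ℝ, ∫ y : ℝ,
        Complex.exp (Complex.I * ξ * (x - y : ℝ)) * (((ξ ^ 2 + k ^ 2)⁻¹ : ℝ) : ℂ) * f y := by
        rw [integral_const_mul, integral_integral_swap hint]
    _ = _ := by
        rw [Complex.ofReal_mul, mul_assoc]
        congr 1
        rw [← integral_const_mul]
        refine integral_congr_ae (Filter.Eventually.of_forall fun ξ => ?_)
        have hs : ((Real.sqrt (2 * Real.pi) : ℝ) : ℂ) ≠ 0 := by
          exact_mod_cast (by positivity : Real.sqrt (2 * Real.pi) ≠ 0)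
        simp only [fHat]
        rw [Complex.real_smul, Complex.ofReal_inv (Real.sqrt _)]
        rw [show ∀ a b c d : ℂ, a * (b * c * (a⁻¹ * d)) = (a * a⁻¹) * (b * c * d) by
          intros; ring, mul_inv_cancel₀ hs, one_mul, ← integral_const_mul]
        refine integral_congr_ae (Filter.Eventually.of_forall fun y => ?_)
        simp only
        rw [show Complex.I * ξ * ((x - y : ℝ) : ℂ)
          = Complex.I * ξ * x + -(Complex.I * ξ * y) by push_cast; ring, Complex.exp_add]
        ring

/-- Cauchy–Schwarz on the Fourier side, with the weight `(ξ² + k²)⁻¹` split evenly. -/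
lemma integral_weight_mul_le {k : ℝ} (hk : 0 < k) {g : ℝ → ℂ} (hg : Continuous g)
    (hi : Integrable fun ξ : ℝ => ‖g ξ‖ ^ 2 * (ξ ^ 2 + k ^ 2)⁻¹) :
    ∫ ξ : ℝ, (ξ ^ 2 + k ^ 2)⁻¹ * ‖g ξ‖ ≤
      Real.sqrt (Real.pi / k) * Real.sqrt (∫ ξ : ℝ, ‖g ξ‖ ^ 2 * (ξ ^ 2 + k ^ 2)⁻¹) := by
  have hpos : ∀ ξ : ℝ, 0 < ξ ^ 2 + k ^ 2 := fun ξ => by positivity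
  have hcw : Continuous fun ξ : ℝ => Real.sqrt (ξ ^ 2 + k ^ 2)⁻¹ :=
    Real.continuous_sqrt.comp (Continuous.inv₀ (by fun_prop) fun ξ => (hpos ξ).ne')
  have hsq : ∀ ξ : ℝ, Real.sqrt (ξ ^ 2 + k ^ 2)⁻¹ ^ 2 = (ξ ^ 2 + k ^ 2)⁻¹ := fun ξ =>
    Real.sq_sqrt (inv_nonneg.2 (hpos ξ).le)
  have e2 : ∀ ξ : ℝ, (Real.sqrt (ξ ^ 2 + k ^ 2)⁻¹ * ‖g ξ‖) ^ 2
      = ‖g ξ‖ ^ 2 * (ξ ^ 2 + k ^ 2)⁻¹ := fun ξ => by rw [mul_pow, hsq, mul_comm]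
  have hcm : Continuous fun ξ : ℝ => Real.sqrt (ξ ^ 2 + k ^ 2)⁻¹ * ‖g ξ‖ := hcw.mul hg.norm
  have m1 : MemLp (fun ξ : ℝ => Real.sqrt (ξ ^ 2 + k ^ 2)⁻¹) (ENNReal.ofReal 2) := by
    rw [ENNReal.ofReal_ofNat, memLp_two_iff_integrable_sq hcw.aestronglyMeasurable]
    simpa only [hsq] using (lorentz_integrable_integral hk).1
  have m2 : MemLp (fun ξ : ℝ => Real.sqrt (ξ ^ 2 + k ^ 2)⁻¹ * ‖g ξ‖) (ENNReal.ofReal 2) := by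
    rw [ENNReal.ofReal_ofNat, memLp_two_iff_integrable_sq hcm.aestronglyMeasurable]
    simpa only [e2] using hi
  have := integral_mul_le_Lp_mul_Lq_of_nonneg Real.HolderConjugate.two_two
    (Filter.Eventually.of_forall fun ξ => Real.sqrt_nonneg _)
    (Filter.Eventually.of_forall fun ξ => by positivity) m1 m2
  simp only [Real.rpow_two, hsq, e2, ← mul_assoc, ← Real.sqrt_eq_rpow,
    (lorentz_integrable_integral hk).2] at this
  simpa only [← pow_two, hsq] using this

/-- `2 ‖R₀(2κ)u‖_{L^∞} ≤ κ^{-1/2} ‖u‖_{H^{-1}_κ}`, with constant one. -/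
lemma abs_two_mul_hOne_le {κ : ℝ} (hκ : 0 < κ) {u : ℝ → ℝ} (hu : Integrable u)
    (hi : Integrable (fun ξ : ℝ =>
        ‖fHat (fun x => (u x : ℂ)) ξ‖ ^ 2 * (ξ ^ 2 + 4 * κ ^ 2) ^ (-1 : ℝ))) (x : ℝ) :
    |2 * κ * hOne κ u x| ≤ (Real.sqrt κ)⁻¹ * sobNormK (-1) κ (fun x => (u x : ℂ)) := by
  have hk : 0 < 2 * κ := by positivity
  have hw : ∀ ξ : ℝ, (ξ ^ 2 + 4 * κ ^ 2) ^ (-1 : ℝ) = (ξ ^ 2 + (2 * κ) ^ 2)⁻¹ := fun ξ => by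
    rw [Real.rpow_neg_one, mul_pow]; norm_num
  unfold sobNormK
  simp only [hw] at hi ⊢
  have huc : Integrable (fun x => (u x : ℂ)) := hu.ofReal
  set g := fHat (fun x => (u x : ℂ)) with hg
  set N := Real.sqrt (∫ ξ : ℝ, ‖g ξ‖ ^ 2 * (ξ ^ 2 + (2 * κ) ^ 2)⁻¹) with hN
  have hcs := integral_weight_mul_le hk (fHat_continuous huc) hi
  have hconv := conv_eq hk huc x
  have hreal : ∫ y : ℝ, ((Real.exp (-(2 * κ) * |x - y|) : ℝ) : ℂ) * (u y : ℂ)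
      = ((∫ y : ℝ, Real.exp (-(2 * κ) * |x - y|) * u y : ℝ) : ℂ) := by
    rw [← integral_complex_ofReal]
    simp
  rw [hreal] at hconv
  have hJ : |∫ y : ℝ, Real.exp (-(2 * κ) * |x - y|) * u y|
      ≤ 2 * κ / Real.pi * Real.sqrt (2 * Real.pi) * (Real.sqrt (Real.pi / (2 * κ)) * N) := by
    rw [← Real.norm_eq_abs, ← Complex.norm_real, hconv, norm_mul, Complex.norm_real,
      Real.norm_of_nonneg (by positivity)]
    refine mul_le_mul_of_nonneg_left (le_trans ?_ hcs) (by positivity)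
    refine (norm_integral_le_integral_norm _).trans_eq ?_
    refine integral_congr_ae (Filter.Eventually.of_forall fun ξ => ?_)
    simp only [norm_mul, Complex.norm_real, Complex.norm_exp]
    rw [Real.norm_of_nonneg (by positivity)]
    simp
  have hh : 2 * κ * hOne κ u x
      = -((2 * κ)⁻¹ * ∫ y : ℝ, Real.exp (-(2 * κ) * |x - y|) * u y) := by
    unfold hOne
    simp only [mul_assoc, integral_const_mul, neg_mul]
    field_simp
    norm_num
  rw [hh, abs_neg, abs_mul, abs_of_pos (by positivity)]
  refine (mul_le_mul_of_nonneg_left hJ (by positivity)).trans_eq ?_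
  have hs : Real.sqrt (2 * Real.pi) * Real.sqrt (Real.pi / (2 * κ))
      = Real.pi * (Real.sqrt κ)⁻¹ := by
    rw [← Real.sqrt_mul (by positivity), ← Real.sqrt_inv]
    rw [show 2 * Real.pi * (Real.pi / (2 * κ)) = Real.pi ^ 2 * κ⁻¹ by field_simp,
      Real.sqrt_mul (by positivity), Real.sqrt_sq Real.pi_pos.le]
  calc _ = Real.pi⁻¹ * (Real.sqrt (2 * Real.pi) * Real.sqrt (Real.pi / (2 * κ))) * N := by
        field_simp
    _ = _ := by rw [hs]; field_simp

/-- `‖2κ h₁‖_{L∞} = 2 ‖R₀(2κ) u‖_{L∞} ≲ κ^{-1/2} ‖u‖_{H^{-1}_κ}` for `κ ≥ 1`;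
hence there is `C` such that if `κ ≥ 1 + C ‖u‖²_{H^{-1}_κ}` then `‖2κh₁‖_{L∞} < 1` and
`‖1/(1+2κh₁)‖_{L∞} + ‖2κh₁/(1+2κh₁)‖_{L∞} ≲ 1`. -/
theorem stmt13 :
    ∃ C > 0, ∀ κ : ℝ, 1 ≤ κ → ∀ u : ℝ → ℝ, Integrable u →
      Integrable (fun ξ : ℝ =>
        ‖fHat (fun x => (u x : ℂ)) ξ‖ ^ 2 * (ξ ^ 2 + 4 * κ ^ 2) ^ (-1 : ℝ)) →
      (∀ x : ℝ, |2 * κ * hOne κ u x|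
          ≤ C * κ ^ (-(1/2) : ℝ) * sobNormK (-1) κ (fun x => (u x : ℂ))) ∧
      (1 + C * (sobNormK (-1) κ (fun x => (u x : ℂ))) ^ 2 ≤ κ →
        (∀ x : ℝ, |2 * κ * hOne κ u x| < 1) ∧
        (∀ x : ℝ, |(1 + 2 * κ * hOne κ u x)⁻¹|
            + |2 * κ * hOne κ u x / (1 + 2 * κ * hOne κ u x)| ≤ C)) := by
  -- With the sharp bound `κ^(-1/2) N`, the choice `C = 4` forces `|2κh₁| ≤ 1/2`.
  refine ⟨4, by norm_num, fun κ hκ u hu hi => ?_⟩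
  have hκ0 : 0 < κ := by linarith
  have hb := abs_two_mul_hOne_le hκ0 hu hi
  set N := sobNormK (-1) κ (fun x => (u x : ℂ)) with hN
  have hN0 : 0 ≤ N := Real.sqrt_nonneg _
  have hp : κ ^ (-(1/2) : ℝ) = (Real.sqrt κ)⁻¹ := by
    rw [Real.rpow_neg hκ0.le, Real.sqrt_eq_rpow]
  have hs0 : 0 < Real.sqrt κ := Real.sqrt_pos.2 hκ0
  refine ⟨fun x => ?_, fun h => ?_⟩
  · rw [hp]
    have : 0 ≤ (Real.sqrt κ)⁻¹ * N := by positivity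
    linarith [hb x]
  · have hhalf : ∀ x, |2 * κ * hOne κ u x| ≤ 1 / 2 := fun x => by
      refine (hb x).trans ?_
      rw [inv_mul_le_iff₀ hs0]
      have : N ≤ Real.sqrt (κ / 4) := Real.le_sqrt_of_sq_le (by linarith)
      rw [Real.sqrt_div hκ0.le, show (4 : ℝ) = 2 ^ 2 by norm_num,
        Real.sqrt_sq (by norm_num)] at this
      linarith
    refine ⟨fun x => lt_of_le_of_lt (hhalf x) (by norm_num), fun x => ?_⟩
    have h1 := hhalf x
    set a := 2 * κ * hOne κ u x
    have h2 := abs_le.1 h1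
    have h3 : 0 < 1 + a := by linarith
    rw [abs_div, abs_inv, abs_of_pos h3, inv_eq_one_div, ← add_div, div_le_iff₀ h3]
    linarith
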